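/- Let Γ be a planar octilinear drawing of a simple graph G and let C be a 3-cycle in G such that at least two of the three vertices of C each have at least one neighbor drawn in the interior of C in Γ. Then at least one edge of C has a bend in Γ. -/

import Mathlib

/-!
Common definitions: polylines, octilinear drawings, planarity, triconnectivity.
-/

/-- A polyline: a sequence of `len + 1` points `pt 0, pt 1, …, pt len`,
consisting of `len ≥ 1` segments. (Values of `pt` beyond `len` are irrelevant.) -/
structure Polyline where
  len : ℕ
  len_pos : 1 ≤ len
  pt : ℕ → ℝ × ℝ

namespace Polyline

/-- The number of bends of a polyline (its interior points `pt 1, …, pt (len-1)`). -/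
def bends (P : Polyline) : ℕ := P.len - 1

/-- Piecewise-linear parametrization of the polyline on the interval `[0, len]`. -/
noncomputable def param (P : Polyline) (s : ℝ) : ℝ × ℝ :=
  P.pt ⌊s⌋.toNat + (s - (⌊s⌋.toNat : ℝ)) • (P.pt (⌊s⌋.toNat + 1) - P.pt ⌊s⌋.toNat)

/-- The image (trace) of the polyline in the plane. -/
noncomputable def image (P : Polyline) : Set (ℝ × ℝ) :=
  P.param '' Set.Icc 0 (P.len : ℝ)

/-- The polyline is a simple curve. -/
def Simple (P : Polyline) : Prop :=
  Set.InjOn P.param (Set.Icc 0 (P.len : ℝ))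

/-- Every segment is nondegenerate, and no two consecutive segments are collinear. -/
def Proper (P : Polyline) : Prop :=
  (∀ i < P.len, P.pt i ≠ P.pt (i + 1)) ∧
  (∀ i, i + 1 < P.len → ¬ Collinear ℝ ({P.pt i, P.pt (i + 1), P.pt (i + 2)} : Set (ℝ × ℝ)))

/-- The segment from `a` to `b` is horizontal, vertical, or diagonal at `45°`. -/
def OctiSeg (a b : ℝ × ℝ) : Prop :=
  b.2 - a.2 = 0 ∨ b.1 - a.1 = 0 ∨ b.2 - a.2 = b.1 - a.1 ∨ b.2 - a.2 = -(b.1 - a.1)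

/-- The polyline is octilinear: proper, with all segments in octilinear directions. -/
def Octilinear (P : Polyline) : Prop :=
  P.Proper ∧ ∀ i < P.len, OctiSeg (P.pt i) (P.pt (i + 1))

end Polyline

/-- Embedding of the integer grid into the real plane. -/
def toR (p : ℤ × ℤ) : ℝ × ℝ := ((p.1 : ℝ), (p.2 : ℝ))

/-- A polyline drawing of a simple graph `G` in the plane:
an injective placement of the vertices and, for each edge, a polyline whose
endpoints are the points of the edge's endvertices, with nondegenerate segments
and no two consecutive segments collinear. -/
structure PolyDrawing {V : Type*} (G : SimpleGraph V) where
  pos : V → ℝ × ℝ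
  inj : Function.Injective pos
  poly : Sym2 V → Polyline
  ends : ∀ u v, G.Adj u v →
    ({(poly s(u, v)).pt 0, (poly s(u, v)).pt (poly s(u, v)).len} : Set (ℝ × ℝ)) =
      {pos u, pos v}
  proper : ∀ e ∈ G.edgeSet, (poly e).Proper

/-- A polyline drawing is planar: every edge-polyline is a simple curve meeting the
vertex points exactly in its two endpoints, and polylines of distinct edges intersect
only in images of common endvertices. -/
def PolyDrawing.IsPlanar {V : Type*} {G : SimpleGraph V} (D : PolyDrawing G) : Prop :=
  (∀ e ∈ G.edgeSet, (D.poly e).Simple) ∧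
  (∀ u v, G.Adj u v →
    (D.poly s(u, v)).image ∩ Set.range D.pos = {D.pos u, D.pos v}) ∧
  (∀ e ∈ G.edgeSet, ∀ e' ∈ G.edgeSet, e ≠ e' →
    (D.poly e).image ∩ (D.poly e').image ⊆ D.pos '' {w | w ∈ e ∧ w ∈ e'})

/-- A simple graph is planar if it admits a planar polyline drawing in `ℝ²`. -/
def GraphPlanar {V : Type*} (G : SimpleGraph V) : Prop :=
  ∃ D : PolyDrawing G, D.IsPlanar

/-- An octilinear drawing of a simple graph `G`: vertices are placed injectively on the
integer grid and each edge is drawn as an octilinear polyline between its endvertices. -/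
structure OctiDrawing {V : Type*} (G : SimpleGraph V) where
  pos : V → ℤ × ℤ
  inj : Function.Injective pos
  poly : Sym2 V → Polyline
  ends : ∀ u v, G.Adj u v →
    ({(poly s(u, v)).pt 0, (poly s(u, v)).pt (poly s(u, v)).len} : Set (ℝ × ℝ)) =
      {toR (pos u), toR (pos v)}
  octi : ∀ e ∈ G.edgeSet, (poly e).Octilinear

/-- An octilinear drawing is planar: every edge-polyline is a simple curve meeting the
vertex points exactly in its two endpoints, and polylines of distinct edges intersect
only in images of common endvertices. -/
def OctiDrawing.IsPlanar {V : Type*} {G : SimpleGraph V} (D : OctiDrawing G) : Prop :=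
  (∀ e ∈ G.edgeSet, (D.poly e).Simple) ∧
  (∀ u v, G.Adj u v →
    (D.poly s(u, v)).image ∩ Set.range (fun w => toR (D.pos w)) =
      {toR (D.pos u), toR (D.pos v)}) ∧
  (∀ e ∈ G.edgeSet, ∀ e' ∈ G.edgeSet, e ≠ e' →
    (D.poly e).image ∩ (D.poly e').image ⊆
      (fun w => toR (D.pos w)) '' {w | w ∈ e ∧ w ∈ e'})

/-- The total number of bends of an octilinear drawing. -/
noncomputable def OctiDrawing.totalBends {V : Type*} [Fintype V] {G : SimpleGraph V}
    (D : OctiDrawing G) : ℕ :=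
  ∑ e ∈ G.edgeSet.toFinite.toFinset, (D.poly e).bends

/-- The union of the images of the polylines of a set `S` of edges. -/
noncomputable def edgesImage {V : Type*} {G : SimpleGraph V} (D : OctiDrawing G)
    (S : Set (Sym2 V)) : Set (ℝ × ℝ) :=
  ⋃ e ∈ S, (D.poly e).image

/-- The interior (in the drawing `D`) of the closed curve formed by the edges in `S`:
the union of the bounded connected components of the complement of the curve. -/
noncomputable def interiorOf {V : Type*} {G : SimpleGraph V} (D : OctiDrawing G)
    (S : Set (Sym2 V)) : Set (ℝ × ℝ) :=
  {z | z ∉ edgesImage D S ∧ Bornology.IsBounded (connectedComponentIn (edgesImage D S)ᶜ z)}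

/-- A graph is triconnected if it has at least `4` vertices and deleting
any at most `2` vertices leaves it connected. -/
def Triconnected {V : Type*} [Fintype V] (G : SimpleGraph V) : Prop :=
  4 ≤ Fintype.card V ∧ ∀ S : Set V, S.ncard ≤ 2 → (G.induce Sᶜ).Connected

/-- The maximum degree of `G` is at most `k`. -/
def MaxDegLE {V : Type*} (G : SimpleGraph V) (k : ℕ) : Prop :=
  ∀ v, (G.neighborSet v).ncard ≤ k

/-!
If no edge of the triangle has a bend, its sides are straight octilinear segments. A point of a
bounded component of the complement of a set lies in the convex hull of that set: otherwise the ray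
leaving it away from some point of the set would escape to infinity. So every point of the interior
lies in the full triangle but on none of its sides. In particular an interior point forces
the triangle to be nondegenerate, and the Jordan curve theorem is not needed.

If a vertex `A` has a neighbour drawn in the interior, then by planarity the edge to that
neighbour, without the point `A`, is a connected set avoiding the triangle. Hence it lies in
the interior, and its segment at `A` points in an octilinear direction strictly inside the angle at
`A`. Octilinear directions are `45°` apart, so this angle is at least `90°`. A triangle cannot
have two such angles.
-/

/-! ### Triangles and bounded components -/

section Convex

variable {𝕜 E : Type*} [Field 𝕜] [LinearOrder 𝕜] [IsStrictOrderedRing 𝕜] [AddCommGroup E]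
  [Module 𝕜 E] {A B C M : E}

lemma not_sameRay_of_mem_convexHull_triple (hM : M ∈ convexHull 𝕜 {A, B, C})
    (hAB : M ∉ segment 𝕜 A B) (hAC : M ∉ segment 𝕜 A C) : ¬ SameRay 𝕜 (B - A) (C - A) := by
  intro h
  have hull_subset {P : E} (hB : B ∈ segment 𝕜 A P) (hC : C ∈ segment 𝕜 A P) :
      M ∈ segment 𝕜 A P :=
    convexHull_min (by simp [Set.insert_subset_iff, left_mem_segment, hB, hC])
      (convex_segment A P) hM
  rw [← vsub_eq_sub, ← vsub_eq_sub] at h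
  rcases wbtw_total_of_sameRay_vsub_left h with hB | hC
  · exact hAC (hull_subset (mem_segment_iff_wbtw.2 hB) (right_mem_segment ..))
  · exact hAB (hull_subset (right_mem_segment ..) (mem_segment_iff_wbtw.2 hC))

lemma exists_pos_smul_add_of_mem_convexHull_triple (hM : M ∈ convexHull 𝕜 {A, B, C})
    (hAB : M ∉ segment 𝕜 A B) (hAC : M ∉ segment 𝕜 A C) :
    ∃ β γ : 𝕜, 0 < β ∧ 0 < γ ∧ M - A = β • (B - A) + γ • (C - A) := by
  rw [← convexJoin_singleton_segment, convexJoin_singleton_left, Set.mem_iUnion₂] at hM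
  obtain ⟨N, hN, hM⟩ := hM
  rw [segment_eq_image'] at hN hM hAB hAC
  obtain ⟨s, ⟨hs0, hs1⟩, rfl⟩ := hN
  obtain ⟨t, ⟨ht0, ht1⟩, rfl⟩ := hM
  have hβ0 : 0 ≤ t * (1 - s) := mul_nonneg ht0 (sub_nonneg.2 hs1)
  have hγ0 : 0 ≤ t * s := mul_nonneg ht0 hs0
  have hβ : t * (1 - s) ≠ 0 := fun h =>
    hAC ⟨t * s, ⟨hγ0, mul_le_one₀ ht1 hs0 hs1⟩, by
      linear_combination (norm := module) -h • (B - A)⟩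
  have hγ : t * s ≠ 0 := fun h =>
    hAB ⟨t * (1 - s), ⟨hβ0, by linarith⟩, by
      linear_combination (norm := module) -h • (C - A)⟩
  exact ⟨t * (1 - s), t * s, hβ0.lt_of_ne' hβ, hγ0.lt_of_ne' hγ, by module⟩

end Convex

section BoundedComponent

variable {E : Type*} [NormedAddCommGroup E] [NormedSpace ℝ E]

lemma not_isBounded_lineMap_image_Ici {A B : E} (hAB : A ≠ B) (c : ℝ) :
    ¬ Bornology.IsBounded (AffineMap.lineMap A B '' Set.Ici c) := by
  intro hb
  obtain ⟨r, hr⟩ := hb.subset_closedBall A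
  have hd : 0 < dist A B := dist_pos.2 hAB
  obtain ⟨t, hct, ht⟩ : ∃ t, c ≤ t ∧ r / dist A B < t :=
    ((Filter.eventually_ge_atTop c).and (Filter.eventually_gt_atTop _)).exists
  have hball : dist (AffineMap.lineMap A B t) A ≤ r := hr ⟨t, hct, rfl⟩
  rw [dist_lineMap_left] at hball
  have hfar : r < ‖t‖ * dist A B :=
    ((div_lt_iff₀ hd).1 ht).trans_le (by gcongr; exact Real.le_norm_self t)
  exact hfar.not_ge hball

lemma mem_convexHull_of_isBounded_connectedComponentIn_compl {S : Set E} (hS : S.Nonempty) {z : E}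
    (hb : Bornology.IsBounded (connectedComponentIn Sᶜ z)) : z ∈ convexHull ℝ S := by
  by_contra hz
  obtain ⟨A, hA⟩ := hS
  have hAS : A ∈ convexHull ℝ S := subset_convexHull ℝ S hA
  have hray_compl : AffineMap.lineMap A z '' Set.Ici (1 : ℝ) ⊆ Sᶜ := by
    rintro _ ⟨t, ht, rfl⟩ htS
    have ht : 1 ≤ t := ht
    have hz_mem : z ∈ segment ℝ A (AffineMap.lineMap A z t) := by
      rw [segment_eq_image_lineMap]
      refine ⟨t⁻¹, ⟨by positivity, inv_le_one_of_one_le₀ ht⟩, ?_⟩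
      rw [AffineMap.lineMap_lineMap_right, inv_mul_cancel₀ (by positivity),
        AffineMap.lineMap_apply_one]
    exact hz ((convex_convexHull ℝ S).segment_subset hAS (subset_convexHull ℝ S htS) hz_mem)
  have hray_conn : IsPreconnected (AffineMap.lineMap A z '' Set.Ici (1 : ℝ)) :=
    isPreconnected_Ici.image _ AffineMap.lineMap_continuous.continuousOn
  have hray : AffineMap.lineMap A z '' Set.Ici (1 : ℝ) ⊆ connectedComponentIn Sᶜ z :=
    hray_conn.subset_connectedComponentIn
      ⟨1, Set.self_mem_Ici, AffineMap.lineMap_apply_one A z⟩ hray_compl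
  exact not_isBounded_lineMap_image_Ici (ne_of_mem_of_not_mem hAS hz) 1 (hb.subset hray)

/-- The union of the three sides of the triangle with vertices `A`, `B`, `C`, which may be
degenerate. -/
def triangleSides (A B C : E) : Set E :=
  segment ℝ A B ∪ segment ℝ B C ∪ segment ℝ A C

lemma mem_convexHull_of_isBounded_connectedComponentIn_compl_triangleSides {A B C M : E}
    (hb : Bornology.IsBounded (connectedComponentIn (triangleSides A B C)ᶜ M)) :
    M ∈ convexHull ℝ {A, B, C} := by
  have hsides : triangleSides A B C ⊆ convexHull ℝ {A, B, C} := by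
    refine Set.union_subset (Set.union_subset ?_ ?_) ?_ <;>
      exact segment_subset_convexHull (by simp) (by simp)
  exact convexHull_min hsides (convex_convexHull ℝ _)
    (mem_convexHull_of_isBounded_connectedComponentIn_compl
      ⟨A, .inl (.inl (left_mem_segment ℝ A B))⟩ hb)

end BoundedComponent

/-! ### Octilinear directions -/

/-- The Euclidean inner product on `ℝ × ℝ`, which Mathlib equips with the sup norm only. -/
def planeDot (u w : ℝ × ℝ) : ℝ := u.1 * w.1 + u.2 * w.2

/-- The cross product of two plane vectors, that is, the signed area of the parallelogram which
they span. -/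
def planeCross (u w : ℝ × ℝ) : ℝ := u.1 * w.2 - u.2 * w.1

/-- A vector whose direction is octilinear; the zero vector is included, as in
`Polyline.OctiSeg`. -/
def IsOctiDir (u : ℝ × ℝ) : Prop := u.2 = 0 ∨ u.1 = 0 ∨ u.2 = u.1 ∨ u.2 = -u.1

lemma octiSeg_iff_isOctiDir_sub {A B : ℝ × ℝ} : Polyline.OctiSeg A B ↔ IsOctiDir (B - A) :=
  Iff.rfl

lemma planeDot_self_pos {u : ℝ × ℝ} (hu : u ≠ 0) : 0 < planeDot u u := by
  refine (add_nonneg (mul_self_nonneg _) (mul_self_nonneg _)).lt_of_ne' fun h => hu ?_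
  exact Prod.ext_iff.2 (mul_self_add_mul_self_eq_zero.1 h)

lemma ne_zero_of_planeDot_ne_zero {u w : ℝ × ℝ} (h : planeDot u w ≠ 0) : u ≠ 0 := by
  rintro rfl
  simp [planeDot] at h

lemma sameRay_of_planeCross_eq_zero_of_planeDot_pos {u w : ℝ × ℝ}
    (hcross : planeCross u w = 0) (hdot : 0 < planeDot u w) : SameRay ℝ u w := by
  have huu : 0 < planeDot u u := planeDot_self_pos (ne_zero_of_planeDot_ne_zero hdot.ne')
  refine .inr (.inr ⟨planeDot u w, planeDot u u, hdot, huu, ?_⟩)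
  ext <;> simp only [planeDot, planeCross, Prod.smul_fst, Prod.smul_snd, smul_eq_mul] at *
  · linear_combination u.2 * hcross
  · linear_combination -u.1 * hcross

/-- Over the complex numbers, `(u · w, u × w)` is `conj u * w`: the statement says that the angle
from `u` to `w` is a multiple of `45°`. -/
lemma IsOctiDir.planeDot_planeCross {u w : ℝ × ℝ} (hu : IsOctiDir u) (hw : IsOctiDir w) :
    IsOctiDir (planeDot u w, planeCross u w) := by
  obtain ⟨u₁, u₂⟩ := u
  obtain ⟨w₁, w₂⟩ := w
  simp only [IsOctiDir, planeDot, planeCross] at *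
  rcases hu with rfl | rfl | rfl | rfl <;> rcases hw with rfl | rfl | rfl | rfl <;> ring_nf <;> simp

lemma IsOctiDir.abs_planeCross_eq_planeDot {u w : ℝ × ℝ} (hu : IsOctiDir u) (hw : IsOctiDir w)
    (hcross : planeCross u w ≠ 0) (hdot : 0 < planeDot u w) :
    |planeCross u w| = planeDot u w := by
  rcases hu.planeDot_planeCross hw with h | h | h | h
  · exact absurd h hcross
  · exact absurd h hdot.ne'
  · rw [show planeCross u w = planeDot u w from h, abs_of_pos hdot]
  · rw [show planeCross u w = -planeDot u w from h, abs_neg, abs_of_pos hdot]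

lemma IsOctiDir.planeDot_nonpos_of_between {u w d : ℝ × ℝ} (hu : IsOctiDir u) (hw : IsOctiDir w)
    (hd : IsOctiDir d) (hray : ¬ SameRay ℝ u w) {β γ : ℝ} (hβ : 0 < β) (hγ : 0 < γ)
    (hcomb : d = β • u + γ • w) : planeDot u w ≤ 0 := by
  by_contra! hdot
  have hcross : planeCross u w ≠ 0 := fun h =>
    hray (sameRay_of_planeCross_eq_zero_of_planeDot_pos h hdot)
  have huu : 0 < planeDot u u := planeDot_self_pos (ne_zero_of_planeDot_ne_zero hdot.ne')
  have hdot_d : planeDot u d = β * planeDot u u + γ * planeDot u w := by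
    simp only [hcomb, planeDot, Prod.fst_add, Prod.snd_add, Prod.smul_fst, Prod.smul_snd,
      smul_eq_mul]
    ring
  have hcross_d : planeCross u d = γ * planeCross u w := by
    simp only [hcomb, planeCross, Prod.fst_add, Prod.snd_add, Prod.smul_fst, Prod.smul_snd,
      smul_eq_mul]
    ring
  -- The angle from `u` to `w` is `45°`, and that from `u` to `d` is positive and smaller.
  have hw_eq : |planeCross u w| = planeDot u w := hu.abs_planeCross_eq_planeDot hw hcross hdot
  have hd_eq : |planeCross u d| = planeDot u d := by
    refine hu.abs_planeCross_eq_planeDot hd ?_ ?_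
    · rw [hcross_d]
      exact mul_ne_zero hγ.ne' hcross
    · rw [hdot_d]
      positivity
  rw [hcross_d, hdot_d, abs_mul, abs_of_pos hγ, hw_eq] at hd_eq
  linarith [mul_pos hβ huu]

lemma eq_of_planeDot_sub_nonpos {A B C : ℝ × ℝ} (hA : planeDot (B - A) (C - A) ≤ 0)
    (hB : planeDot (A - B) (C - B) ≤ 0) : A = B := by
  by_contra! hAB
  have hpos : 0 < planeDot (B - A) (B - A) := planeDot_self_pos (sub_ne_zero.2 hAB.symm)
  have hsum : planeDot (B - A) (B - A) = planeDot (B - A) (C - A) + planeDot (A - B) (C - B) := by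
    simp only [planeDot, Prod.fst_sub, Prod.snd_sub]
    ring
  linarith

lemma planeDot_nonpos_of_octiSeg_inside {A B C M : ℝ × ℝ} (hAB : Polyline.OctiSeg A B)
    (hAC : Polyline.OctiSeg A C) (hAM : Polyline.OctiSeg A M) (hM : M ∉ triangleSides A B C)
    (hb : Bornology.IsBounded (connectedComponentIn (triangleSides A B C)ᶜ M)) :
    planeDot (B - A) (C - A) ≤ 0 := by
  have hM_hull : M ∈ convexHull ℝ {A, B, C} :=
    mem_convexHull_of_isBounded_connectedComponentIn_compl_triangleSides hb
  have hMB : M ∉ segment ℝ A B := fun h => hM (.inl (.inl h))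
  have hMC : M ∉ segment ℝ A C := fun h => hM (.inr h)
  obtain ⟨β, γ, hβ, hγ, hcomb⟩ := exists_pos_smul_add_of_mem_convexHull_triple hM_hull hMB hMC
  rw [octiSeg_iff_isOctiDir_sub] at hAB hAC hAM
  exact hAB.planeDot_nonpos_of_between hAC hAM
    (not_sameRay_of_mem_convexHull_triple hM_hull hMB hMC) hβ hγ hcomb

/-! ### Polylines -/

namespace Polyline

lemma OctiSeg.symm {a b : ℝ × ℝ} (h : OctiSeg a b) : OctiSeg b a := by
  unfold OctiSeg at *
  grind

variable (P : Polyline)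

lemma param_natCast_add (i : ℕ) {t : ℝ} (ht : t ∈ Set.Icc (0 : ℝ) 1) :
    P.param (i + t) = P.pt i + t • (P.pt (i + 1) - P.pt i) := by
  rcases ht.2.lt_or_eq with h | rfl
  · have hfloor : ⌊(i : ℝ) + t⌋ = (i : ℤ) := by
      rw [Int.floor_eq_iff]
      push_cast
      exact ⟨by linarith [ht.1], by linarith⟩
    simp [param, hfloor]
  · simp [param]

lemma param_natCast (i : ℕ) : P.param i = P.pt i := by
  simpa using P.param_natCast_add i (Set.left_mem_Icc.2 zero_le_one)

lemma param_zero : P.param 0 = P.pt 0 := by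
  simpa using P.param_natCast 0

lemma pt_mem_image {i : ℕ} (hi : i ≤ P.len) : P.pt i ∈ P.image :=
  ⟨i, ⟨by positivity, by exact_mod_cast hi⟩, P.param_natCast i⟩

lemma continuousOn_param_Icc_natCast (n : ℕ) : ContinuousOn P.param (Set.Icc 0 (n : ℝ)) := by
  induction n with
  | zero => simp
  | succ n ih =>
    have hlast : ContinuousOn P.param (Set.Icc (n : ℝ) (n + 1)) := by
      have haffine : ContinuousOn (fun s : ℝ => P.pt n + (s - n) • (P.pt (n + 1) - P.pt n))
          (Set.Icc (n : ℝ) (n + 1)) := by fun_prop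
      refine haffine.congr fun s hs => ?_
      have := P.param_natCast_add n (t := s - n) ⟨by linarith [hs.1], by linarith [hs.2]⟩
      rwa [add_sub_cancel] at this
    have hunion : Set.Icc (0 : ℝ) ((n + 1 : ℕ) : ℝ) =
        Set.Icc 0 (n : ℝ) ∪ Set.Icc (n : ℝ) (n + 1) := by
      rw [Nat.cast_add_one, Set.Icc_union_Icc_eq_Icc (by positivity) (by linarith)]
    rw [hunion]
    exact ih.union_of_isClosed hlast isClosed_Icc isClosed_Icc

lemma image_eq_segment_of_len_eq_one (h : P.len = 1) : P.image = segment ℝ (P.pt 0) (P.pt 1) := by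
  rw [segment_eq_image', image, h, Nat.cast_one]
  exact Set.image_congr fun t ht => by simpa using P.param_natCast_add 0 ht

variable {P}

lemma Simple.isPreconnected_image_sdiff_param (hP : P.Simple) {s : ℝ}
    (hs : s ∈ Set.Icc 0 (P.len : ℝ)) (hconn : IsPreconnected (Set.Icc 0 (P.len : ℝ) \ {s})) :
    IsPreconnected (P.image \ {P.param s}) := by
  have himage : P.image \ {P.param s} = P.param '' (Set.Icc 0 (P.len : ℝ) \ {s}) := by
    rw [Set.InjOn.image_sdiff_subset hP (Set.singleton_subset_iff.2 hs), Set.image_singleton, image]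
  rw [himage]
  exact hconn.image _ ((P.continuousOn_param_Icc_natCast _).mono Set.sdiff_subset)

lemma Simple.isPreconnected_image_sdiff_head (hP : P.Simple) :
    IsPreconnected (P.image \ {P.pt 0}) := by
  rw [← P.param_zero]
  refine hP.isPreconnected_image_sdiff_param (Set.left_mem_Icc.2 (Nat.cast_nonneg _)) ?_
  rw [Set.Icc_sdiff_left]
  exact isPreconnected_Ioc

lemma Simple.isPreconnected_image_sdiff_last (hP : P.Simple) :
    IsPreconnected (P.image \ {P.pt P.len}) := by
  rw [← P.param_natCast]
  refine hP.isPreconnected_image_sdiff_param (Set.right_mem_Icc.2 (Nat.cast_nonneg _)) ?_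
  rw [Set.Icc_sdiff_right]
  exact isPreconnected_Ico

lemma Octilinear.exists_octiSeg_head (hP : P.Octilinear) :
    ∃ m ∈ P.image \ {P.pt 0}, OctiSeg (P.pt 0) m :=
  ⟨P.pt 1, ⟨P.pt_mem_image P.len_pos, (hP.1.1 0 P.len_pos).symm⟩, hP.2 0 P.len_pos⟩

lemma Octilinear.exists_octiSeg_last (hP : P.Octilinear) :
    ∃ m ∈ P.image \ {P.pt P.len}, OctiSeg (P.pt P.len) m := by
  obtain ⟨k, hk⟩ := Nat.exists_eq_add_of_le' P.len_pos
  have hk_lt : k < P.len := by omega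
  rw [hk]
  exact ⟨P.pt k, ⟨P.pt_mem_image hk_lt.le, hP.1.1 k hk_lt⟩, (hP.2 k hk_lt).symm⟩

end Polyline

/-! ### Drawings -/

lemma toR_injective : Function.Injective toR := fun p q h => by
  simpa [toR, Prod.ext_iff] using h

section Drawing

variable {V : Type*} {G : SimpleGraph V} (D : OctiDrawing G) {S : Set (Sym2 V)} {a b c u v x : V}

lemma OctiDrawing.pt_zero_pt_len_eq_or (h : G.Adj u v) :
    ((D.poly s(u, v)).pt 0 = toR (D.pos u) ∧
      (D.poly s(u, v)).pt (D.poly s(u, v)).len = toR (D.pos v)) ∨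
    ((D.poly s(u, v)).pt 0 = toR (D.pos v) ∧
      (D.poly s(u, v)).pt (D.poly s(u, v)).len = toR (D.pos u)) := by
  simpa [Set.pair_eq_pair_iff] using D.ends u v h

lemma OctiDrawing.octiSeg_of_len_eq_one (h : G.Adj u v)
    (hlen : (D.poly s(u, v)).len = 1) : Polyline.OctiSeg (toR (D.pos u)) (toR (D.pos v)) := by
  have hocti := (D.octi s(u, v) h).2 0 (D.poly s(u, v)).len_pos
  rcases hlen ▸ D.pt_zero_pt_len_eq_or h with ⟨h₀, h₁⟩ | ⟨h₀, h₁⟩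
  · rwa [zero_add, h₀, h₁] at hocti
  · rw [zero_add, h₀, h₁] at hocti
    exact hocti.symm

lemma OctiDrawing.image_eq_segment_of_len_eq_one (h : G.Adj u v)
    (hlen : (D.poly s(u, v)).len = 1) :
    (D.poly s(u, v)).image = segment ℝ (toR (D.pos u)) (toR (D.pos v)) := by
  rw [Polyline.image_eq_segment_of_len_eq_one _ hlen]
  rcases hlen ▸ D.pt_zero_pt_len_eq_or h with ⟨h₀, h₁⟩ | ⟨h₀, h₁⟩
  · rw [h₀, h₁]
  · rw [h₀, h₁, segment_symm]

lemma OctiDrawing.pos_mem_image (h : G.Adj u v) :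
    toR (D.pos v) ∈ (D.poly s(u, v)).image := by
  rcases D.pt_zero_pt_len_eq_or h with ⟨-, hv⟩ | ⟨hv, -⟩ <;> rw [← hv]
  · exact Polyline.pt_mem_image _ le_rfl
  · exact Polyline.pt_mem_image _ (Nat.zero_le _)

lemma OctiDrawing.isPreconnected_image_sdiff (h : G.Adj u v) (hsimple : (D.poly s(u, v)).Simple) :
    IsPreconnected ((D.poly s(u, v)).image \ {toR (D.pos u)}) := by
  rcases D.pt_zero_pt_len_eq_or h with ⟨hu, -⟩ | ⟨-, hu⟩ <;> rw [← hu]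
  · exact hsimple.isPreconnected_image_sdiff_head
  · exact hsimple.isPreconnected_image_sdiff_last

lemma OctiDrawing.exists_octiSeg_mem_image_sdiff (h : G.Adj u v) :
    ∃ m ∈ (D.poly s(u, v)).image \ {toR (D.pos u)}, Polyline.OctiSeg (toR (D.pos u)) m := by
  rcases D.pt_zero_pt_len_eq_or h with ⟨hu, -⟩ | ⟨-, hu⟩ <;> rw [← hu]
  · exact (D.octi _ h).exists_octiSeg_head
  · exact (D.octi _ h).exists_octiSeg_last

variable {D}

lemma mem_edgesImage {z : ℝ × ℝ} : z ∈ edgesImage D S ↔ ∃ e ∈ S, z ∈ (D.poly e).image := by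
  simp [edgesImage]

lemma OctiDrawing.IsPlanar.disjoint_image_sdiff_edgesImage (hD : D.IsPlanar) (hS : S ⊆ G.edgeSet)
    (hax : G.Adj a x) (hx : toR (D.pos x) ∉ edgesImage D S) :
    Disjoint ((D.poly s(a, x)).image \ {toR (D.pos a)}) (edgesImage D S) := by
  rw [Set.disjoint_left]
  rintro z ⟨hz, hza⟩ hzS
  obtain ⟨e, he, hze⟩ := mem_edgesImage.1 hzS
  have hne : s(a, x) ≠ e := by
    rintro rfl
    exact hx (mem_edgesImage.2 ⟨_, he, D.pos_mem_image hax⟩)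
  obtain ⟨w, ⟨hw, -⟩, rfl⟩ := hD.2.2 _ hax e (hS he) hne ⟨hz, hze⟩
  rcases Sym2.mem_iff.1 hw with rfl | rfl
  · exact hza rfl
  · exact hx hzS

lemma subset_interiorOf_of_isPreconnected {K : Set (ℝ × ℝ)} (hK : IsPreconnected K)
    (hdisj : Disjoint K (edgesImage D S)) {z : ℝ × ℝ} (hzK : z ∈ K) (hz : z ∈ interiorOf D S) :
    K ⊆ interiorOf D S := by
  intro m hm
  have hmz : m ∈ connectedComponentIn (edgesImage D S)ᶜ z :=
    hK.subset_connectedComponentIn hzK hdisj.subset_compl_right hm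
  exact ⟨Set.disjoint_left.1 hdisj hm, connectedComponentIn_eq hmz ▸ hz.2⟩

lemma OctiDrawing.IsPlanar.exists_octiSeg_mem_interiorOf (hD : D.IsPlanar) (hS : S ⊆ G.edgeSet)
    (hax : G.Adj a x) (hx : toR (D.pos x) ∈ interiorOf D S) :
    ∃ m ∈ interiorOf D S, Polyline.OctiSeg (toR (D.pos a)) m := by
  obtain ⟨m, hm, hocti⟩ := D.exists_octiSeg_mem_image_sdiff hax
  have hxa : toR (D.pos x) ≠ toR (D.pos a) := (toR_injective.comp D.inj).ne hax.ne'
  exact ⟨m, subset_interiorOf_of_isPreconnected (D.isPreconnected_image_sdiff hax (hD.1 _ hax))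
    (hD.disjoint_image_sdiff_edgesImage hS hax hx.1) ⟨D.pos_mem_image hax, hxa⟩ hx hm, hocti⟩

lemma edgesImage_triangle_of_len_eq_one (hab : G.Adj a b) (hbc : G.Adj b c) (hac : G.Adj a c)
    (hlen : ∀ e ∈ ({s(a, b), s(b, c), s(a, c)} : Set (Sym2 V)), (D.poly e).len = 1) :
    edgesImage D {s(a, b), s(b, c), s(a, c)} =
      triangleSides (toR (D.pos a)) (toR (D.pos b)) (toR (D.pos c)) := by
  rw [edgesImage, Set.biUnion_insert, Set.biUnion_pair, ← Set.union_assoc, triangleSides,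
    D.image_eq_segment_of_len_eq_one hab (hlen _ (by simp)),
    D.image_eq_segment_of_len_eq_one hbc (hlen _ (by simp)),
    D.image_eq_segment_of_len_eq_one hac (hlen _ (by simp))]

lemma OctiDrawing.IsPlanar.planeDot_nonpos_of_adj_interior (hD : D.IsPlanar)
    (hab : G.Adj a b) (hbc : G.Adj b c) (hac : G.Adj a c)
    (hlen : ∀ e ∈ ({s(a, b), s(b, c), s(a, c)} : Set (Sym2 V)), (D.poly e).len = 1)
    (hx : ∃ x, G.Adj a x ∧ toR (D.pos x) ∈ interiorOf D {s(a, b), s(b, c), s(a, c)}) :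
    planeDot (toR (D.pos b) - toR (D.pos a)) (toR (D.pos c) - toR (D.pos a)) ≤ 0 := by
  obtain ⟨x, hax, hx⟩ := hx
  have hS : {s(a, b), s(b, c), s(a, c)} ⊆ G.edgeSet := by
    simp [Set.insert_subset_iff, hab, hbc, hac]
  obtain ⟨m, ⟨hm, hbdd⟩, hocti⟩ := hD.exists_octiSeg_mem_interiorOf hS hax hx
  rw [edgesImage_triangle_of_len_eq_one hab hbc hac hlen] at hm hbdd
  exact planeDot_nonpos_of_octiSeg_inside (D.octiSeg_of_len_eq_one hab (hlen _ (by simp)))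
    (D.octiSeg_of_len_eq_one hac (hlen _ (by simp))) hocti hm hbdd

lemma exists_edges_eq_of_length_eq_three (W : G.Walk v v) (h3 : W.length = 3)
    (ha : a ∈ W.support) (hb : b ∈ W.support) (hab : a ≠ b) :
    ∃ c, G.Adj a b ∧ G.Adj b c ∧ G.Adj a c ∧
      {e | e ∈ W.edges} = ({s(a, b), s(b, c), s(a, c)} : Set (Sym2 V)) := by
  match W, h3 with
  | .cons (v := u) hvu (.cons (v := w) huw (.cons hwv .nil)), _ =>
    simp only [SimpleGraph.Walk.support_cons, SimpleGraph.Walk.support_nil, List.mem_cons,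
      List.not_mem_nil, or_false] at ha hb
    simp only [SimpleGraph.Walk.edges_cons, SimpleGraph.Walk.edges_nil, List.mem_cons,
      List.not_mem_nil, or_false, Set.ext_iff, Set.mem_ofPred_eq, Set.mem_insert_iff,
      Set.mem_singleton_iff]
    grind [Sym2.eq_swap, SimpleGraph.Adj.symm]

end Drawing

/-- Let `D` be a planar octilinear drawing of a simple graph `G` and let
`C` be a `3`-cycle in `G` such that at least two of the three vertices of `C` each have at
least one neighbor drawn in the interior of `C`. Then at least one edge of `C` has a bend. -/
theorem triangle_edge_has_bend {V : Type*} {G : SimpleGraph V}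
    (D : OctiDrawing G) (hD : D.IsPlanar) {v : V} (C : G.Walk v v) (hC : C.IsCycle)
    (h3 : C.length = 3) (a b : V) (ha : a ∈ C.support) (hb : b ∈ C.support) (hab : a ≠ b)
    (hna : ∃ x, G.Adj a x ∧ toR (D.pos x) ∈ interiorOf D {e | e ∈ C.edges})
    (hnb : ∃ x, G.Adj b x ∧ toR (D.pos x) ∈ interiorOf D {e | e ∈ C.edges}) :
    ∃ e ∈ C.edges, 1 ≤ (D.poly e).bends := by
  by_contra! hbends
  obtain ⟨c, hab', hbc, hac, hedges⟩ := exists_edges_eq_of_length_eq_three C h3 ha hb hab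
  have hlen : ∀ e ∈ {e | e ∈ C.edges}, (D.poly e).len = 1 := fun e he => by
    have hbends_e : (D.poly e).len - 1 < 1 := hbends e he
    have := (D.poly e).len_pos
    omega
  have hedges_swap : ({s(a, b), s(b, c), s(a, c)} : Set (Sym2 V)) =
      {s(b, a), s(a, c), s(b, c)} := by
    rw [Sym2.eq_swap, Set.pair_comm]
  rw [hedges] at hlen hna hnb
  have hangle_a := hD.planeDot_nonpos_of_adj_interior hab' hbc hac hlen hna
  rw [hedges_swap] at hlen hnb
  have hangle_b := hD.planeDot_nonpos_of_adj_interior hab'.symm hac hbc hlen hnb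
  exact hab (toR_injective.comp D.inj (eq_of_planeDot_sub_nonpos hangle_a hangle_b))
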